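/- Let d ≥ 1 and let f, g : ℝ^d → ℂ be measurable. Then there exists a constant C depending only on d such that ∫_{ℝ^d} |f(x)||g(x)| dx ≤ C·‖f‖_X·‖g‖_{X*}. -/

import Mathlib

noncomputable section
open MeasureTheory Metric Set ENNReal

abbrev Ed (d : ℕ) := EuclideanSpace ℝ (Fin d)

/-- partial derivative of a complex valued function -/
def pd {d : ℕ} (u : Ed d → ℂ) (i : Fin d) (x : Ed d) : ℂ :=
  fderiv ℝ u x (EuclideanSpace.single i 1)

/-- Laplacian of a complex valued function -/
def lap {d : ℕ} (u : Ed d → ℂ) (x : Ed d) : ℂ :=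
  ∑ i, fderiv ℝ (pd u i) x (EuclideanSpace.single i 1)

/-- squared norm of the gradient, as an extended nonnegative real -/
def gradSq {d : ℕ} (u : Ed d → ℂ) (x : Ed d) : ℝ≥0∞ :=
  ∑ i, (‖pd u i x‖₊ : ℝ≥0∞) ^ 2

/-- |u(x)|² as an extended nonnegative real -/
def usq {d : ℕ} (u : Ed d → ℂ) (x : Ed d) : ℝ≥0∞ := (‖u x‖₊ : ℝ≥0∞) ^ 2

/-- radial derivative ∂_r V (x) = (x/|x|)·∇V(x) -/
def radialDeriv {d : ℕ} (V : Ed d → ℝ) (x : Ed d) : ℝ :=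
  fderiv ℝ V x x / ‖x‖

/-- Morrey–Campanato type quantity sup_{R>0} (1/R) ∫_{B(0,R)} g -/
def nX2 {d : ℕ} (g : Ed d → ℝ≥0∞) : ℝ≥0∞ :=
  ⨆ (R : ℝ) (_ : 0 < R), (ENNReal.ofReal R)⁻¹ * ∫⁻ x in ball (0 : Ed d) R, g x

/-- dyadic shell C_j -/
def shell (d : ℕ) (j : ℤ) : Set (Ed d) := {x | (2:ℝ)^j < ‖x‖ ∧ ‖x‖ ≤ (2:ℝ)^(j+1)}

/-- the dual norm ‖f‖_{X*} applied to g = |f|² -/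
def nXstar {d : ℕ} (g : Ed d → ℝ≥0∞) : ℝ≥0∞ :=
  ∑' j : ℤ, (ENNReal.ofReal ((2:ℝ)^(j+1)) * ∫⁻ x in shell d j, g x) ^ (1/2 : ℝ)

/-- the index j₀ with 2^{j₀} < ρ ≤ 2^{j₀+1} -/
def jIdx (ρ : ℝ) : ℤ := ⌈Real.logb 2 ρ⌉ - 1

/-- sup_{R ≥ ρ} (1/R)∫_{B(0,R)} g -/
def nX2r {d : ℕ} (ρ : ℝ) (g : Ed d → ℝ≥0∞) : ℝ≥0∞ :=
  ⨆ (R : ℝ) (_ : ρ ≤ R), (ENNReal.ofReal R)⁻¹ * ∫⁻ x in ball (0 : Ed d) R, g x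

/-- the dual norm ‖f‖_{X*_ρ} applied to g = |f|² -/
def nXstarr {d : ℕ} (ρ : ℝ) (g : Ed d → ℝ≥0∞) : ℝ≥0∞ :=
  (∑' j : {j : ℤ // jIdx ρ ≤ j},
    (ENNReal.ofReal ((2:ℝ)^((j:ℤ)+1)) * ∫⁻ x in shell d (j:ℤ), g x) ^ (1/2 : ℝ))
  + (ENNReal.ofReal ρ * ∫⁻ x in ball (0 : Ed d) ρ, g x) ^ (1/2 : ℝ)

/-- integral of g over the sphere of radius R w.r.t. (d-1)-dimensional Hausdorff measure -/
def sphInt {d : ℕ} (R : ℝ) (g : Ed d → ℝ≥0∞) : ℝ≥0∞ :=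
  ∫⁻ x in Metric.sphere (0 : Ed d) R, g x ∂(μH[(d:ℝ) - 1])

/-!
Up to the origin, which is a null set when `d ≥ 1`, space is the union of the dyadic shells `C_j`.
On `C_j`, Cauchy–Schwarz bounds `∫ |f||g|` by `(∫_{C_j} |f|²)^{1/2} (∫_{C_j} |g|²)^{1/2}`. As `C_j`
lies in every ball of radius `R > 2^{j+1}`, letting `R` decrease to `2^{j+1}` bounds the first
factor by `(2^{j+1})^{1/2} ‖f‖_X`. Moving `(2^{j+1})^{1/2}` to the second factor turns it into the
`j`-th term of `‖g‖_{X*}`, and summing over `j` gives the inequality with constant `1`.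
-/

open Filter Topology

lemma lintegral_mul_le_L2_mul_L2 {α : Type*} [MeasurableSpace α] {μ : Measure α}
    {u v : α → ℝ≥0∞} (hu : AEMeasurable u μ) (hv : AEMeasurable v μ) :
    ∫⁻ x, u x * v x ∂μ ≤
      (∫⁻ x, u x ^ 2 ∂μ) ^ (1/2 : ℝ) * (∫⁻ x, v x ^ 2 ∂μ) ^ (1/2 : ℝ) := by
  simpa only [Pi.mul_apply, ENNReal.rpow_ofNat] using
    ENNReal.lintegral_mul_le_Lp_mul_Lq μ Real.HolderConjugate.two_two hu hv

section Shells

variable {d : ℕ}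

lemma iUnion_shell : ⋃ j : ℤ, shell d j = {0}ᶜ := by
  ext x
  simp only [mem_iUnion, mem_compl_singleton_iff]
  constructor
  · rintro ⟨j, hj, -⟩
    exact norm_pos_iff.mp ((zpow_pos two_pos j).trans hj)
  · intro hx
    exact exists_mem_Ioc_zpow (norm_pos_iff.mpr hx) one_lt_two

lemma shell_subset_closedBall (j : ℤ) : shell d j ⊆ closedBall 0 (2 ^ (j + 1)) :=
  fun _ hx => mem_closedBall_zero_iff.mpr hx.2

lemma lintegral_le_tsum_setLIntegral_shell (μ : Measure (Ed d)) [NullSingletonClass μ]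
    (u : Ed d → ℝ≥0∞) :
    ∫⁻ x, u x ∂μ ≤ ∑' j : ℤ, ∫⁻ x in shell d j, u x ∂μ :=
  calc ∫⁻ x, u x ∂μ = ∫⁻ x in ⋃ j : ℤ, shell d j, u x ∂μ := by
        rw [iUnion_shell, restrict_compl_singleton]
    _ ≤ ∑' j : ℤ, ∫⁻ x in shell d j, u x ∂μ := lintegral_iUnion_le _ _

end Shells

section Duality

variable {d : ℕ} {u v : Ed d → ℝ≥0∞}

lemma setLIntegral_ball_le_mul_nX2 (u : Ed d → ℝ≥0∞) {R : ℝ} (hR : 0 < R) :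
    ∫⁻ x in ball 0 R, u x ≤ ENNReal.ofReal R * nX2 u := by
  rw [← ENNReal.inv_mul_le_iff (ENNReal.ofReal_pos.mpr hR).ne' ENNReal.ofReal_ne_top]
  exact le_iSup₂ (f := fun (R : ℝ) (_ : 0 < R) =>
    (ENNReal.ofReal R)⁻¹ * ∫⁻ x in ball (0 : Ed d) R, u x) R hR

lemma setLIntegral_closedBall_le_mul_nX2 (u : Ed d → ℝ≥0∞) {R : ℝ} (hR : 0 < R) :
    ∫⁻ x in closedBall 0 R, u x ≤ ENNReal.ofReal R * nX2 u := by
  have tendsto_bound : Tendsto (fun r => ENNReal.ofReal r * nX2 u) (𝓝[>] R)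
      (𝓝 (ENNReal.ofReal R * nX2 u)) :=
    ENNReal.Tendsto.mul_const (ENNReal.tendsto_ofReal nhdsWithin_le_nhds)
      (Or.inl (ENNReal.ofReal_pos.mpr hR).ne')
  refine ge_of_tendsto tendsto_bound ?_
  filter_upwards [self_mem_nhdsWithin] with r (hr : R < r)
  exact (lintegral_mono_set (closedBall_subset_ball hr)).trans
    (setLIntegral_ball_le_mul_nX2 u (hR.trans hr))

lemma setLIntegral_shell_le_mul_nX2 (u : Ed d → ℝ≥0∞) (j : ℤ) :
    ∫⁻ x in shell d j, u x ≤ ENNReal.ofReal (2 ^ (j + 1)) * nX2 u :=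
  (lintegral_mono_set (shell_subset_closedBall j)).trans
    (setLIntegral_closedBall_le_mul_nX2 u (zpow_pos two_pos _))

lemma setLIntegral_shell_mul_le {j : ℤ} (hu : AEMeasurable u (volume.restrict (shell d j)))
    (hv : AEMeasurable v (volume.restrict (shell d j))) :
    ∫⁻ x in shell d j, u x * v x ≤
      nX2 (fun x => u x ^ 2) ^ (1/2 : ℝ) *
        (ENNReal.ofReal (2 ^ (j + 1)) * ∫⁻ x in shell d j, v x ^ 2) ^ (1/2 : ℝ) := by
  have half_nonneg : (0 : ℝ) ≤ 1/2 := by norm_num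
  calc ∫⁻ x in shell d j, u x * v x
      ≤ (∫⁻ x in shell d j, u x ^ 2) ^ (1/2 : ℝ) * (∫⁻ x in shell d j, v x ^ 2) ^ (1/2 : ℝ) :=
        lintegral_mul_le_L2_mul_L2 hu hv
    _ ≤ (ENNReal.ofReal (2 ^ (j + 1)) * nX2 (fun x => u x ^ 2)) ^ (1/2 : ℝ) *
          (∫⁻ x in shell d j, v x ^ 2) ^ (1/2 : ℝ) := by
        gcongr
        exact setLIntegral_shell_le_mul_nX2 _ j
    _ = nX2 (fun x => u x ^ 2) ^ (1/2 : ℝ) *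
          (ENNReal.ofReal (2 ^ (j + 1)) * ∫⁻ x in shell d j, v x ^ 2) ^ (1/2 : ℝ) := by
        simp only [ENNReal.mul_rpow_of_nonneg _ _ half_nonneg]
        ring

theorem stmt_18_general (hd : 1 ≤ d) (hu : AEMeasurable u) (hv : AEMeasurable v) :
    ∫⁻ x, u x * v x ≤ nX2 (fun x => u x ^ 2) ^ (1/2 : ℝ) * nXstar (fun x => v x ^ 2) := by
  have : Nonempty (Fin d) := ⟨⟨0, hd⟩⟩
  rw [nXstar, ← ENNReal.tsum_mul_left]
  calc ∫⁻ x, u x * v x ≤ ∑' j : ℤ, ∫⁻ x in shell d j, u x * v x :=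
        lintegral_le_tsum_setLIntegral_shell volume _
    _ ≤ _ := ENNReal.tsum_le_tsum fun _ => setLIntegral_shell_mul_le hu.restrict hv.restrict

end Duality

/-- duality pairing `∫ |f||g| ≤ C ‖f‖_X ‖g‖_{X*}`. -/
theorem stmt_18 (d : ℕ) (hd : 1 ≤ d) :
    ∃ C : ℝ, 0 < C ∧
      ∀ (f g : Ed d → ℂ), Measurable f → Measurable g →
      (∫⁻ x, (‖f x‖₊ : ℝ≥0∞) * (‖g x‖₊ : ℝ≥0∞))
        ≤ ENNReal.ofReal C * (nX2 (usq f)) ^ (1/2 : ℝ) * nXstar (usq g) := by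
  refine ⟨1, one_pos, fun f g hf hg => ?_⟩
  rw [ENNReal.ofReal_one, one_mul]
  exact stmt_18_general hd hf.nnnorm.coe_nnreal_ennreal.aemeasurable
    hg.nnnorm.coe_nnreal_ennreal.aemeasurable
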